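/- Let k ≥ 3 and let G be a bipartite egr(n,k,g,λ) graph with g ≡ 0 (mod 4). Suppose c₁ and c are natural numbers such that for every vertex v of G the number of closed walks of length g/2 based at v equals c₁ and the number of cycle-free closed walks of length g based at v equals c. Then n·(c + kλ − c₁²) ≥ 2·(c + kλ + k^g − 2·c₁·k^{g/2}). -/

import Mathlib

/-!
Put `m = g / 2`, let `A` be the adjacency matrix of `G` and look at the row of a vertex `v` in
`A ^ m`. Since `m` is even this row is supported on the colour class of `v`, which has `n / 2`
elements. Its entries sum to `k ^ m`, the diagonal entry is `c₁`, and the squares of the entries sum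
to the number `X` of closed walks of length `g` at `v`. Cauchy-Schwarz on the `n / 2 - 1`
off-diagonal entries in the colour class gives `2 (k ^ m - c₁) ^ 2 ≤ (n - 2) (X - c₁ ^ 2)`.

A closed walk of length `g` that is not cycle-free contains a cycle of length at least `g`, so it
runs exactly once around this cycle. Each such walk uses two edges at `v`, and each of the `k` edges
at `v` is used by `2 λ` of them, so there are `k λ` such walks and `X ≤ c + k λ`.
-/

open SimpleGraph

/-- `G` is an edge-girth-regular graph with parameters `(n, k, g, lam)`:
a finite simple graph on `n` vertices, `k`-regular, of girth `g`, in which every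
edge lies on exactly `lam` cycles of length `g` (each such cycle corresponds to
exactly two closed walks based at an endpoint of the edge and traversing it). -/
def SimpleGraph.IsEGR {V : Type*} (G : SimpleGraph V) (n k g lam : ℕ) : Prop :=
  Finite V ∧ Nat.card V = n ∧
    (∀ v : V, (G.neighborSet v).ncard = k) ∧
    G.egirth = (g : ℕ∞) ∧
    ∀ u v : V, G.Adj u v →
      Nat.card {p : G.Walk u u // p.IsCycle ∧ p.length = g ∧ s(u, v) ∈ p.edges} = 2 * lam

/-- The number of closed walks of length `l` based at `v`. -/
noncomputable def SimpleGraph.closedWalkCount {V : Type*} (G : SimpleGraph V) (v : V) (l : ℕ) : ℕ :=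
  Nat.card {p : G.Walk v v // p.length = l}

/-- The number of cycle-free closed walks of length `l` based at `v`,
i.e. closed walks whose traversed edges form an acyclic subgraph. -/
noncomputable def SimpleGraph.cycleFreeClosedWalkCount {V : Type*} (G : SimpleGraph V) (v : V)
    (l : ℕ) : ℕ :=
  Nat.card {p : G.Walk v v // p.length = l ∧ p.toSubgraph.coe.IsAcyclic}

open Finset Matrix

section Cycles

variable {V : Type*} {G : SimpleGraph V} {v : V}

lemma exists_isCycle_toSubgraph_le_of_not_isAcyclic_coe {H : G.Subgraph}
    (hH : ¬ H.coe.IsAcyclic) : ∃ (u : V) (w : G.Walk u u), w.IsCycle ∧ w.toSubgraph ≤ H := by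
  simp only [IsAcyclic, not_forall, not_not] at hH
  obtain ⟨u, w, hw⟩ := hH
  refine ⟨H.hom u, w.map H.hom, hw.map Subgraph.hom_injective, ?_⟩
  rw [Walk.toSubgraph_map]
  exact Subgraph.coeSubgraph_le _

lemma isCycle_of_toSubgraph_le_of_length_le {u : V} {w : G.Walk u u} {p : G.Walk v v}
    (hw : w.IsCycle) (hwp : w.toSubgraph ≤ p.toSubgraph) (hlen : p.length ≤ w.length) :
    p.IsCycle := by
  have edges_perm : w.edges.Perm p.edges := by
    refine (hw.edges_nodup.subperm fun e he => ?_).perm_of_length_le (by simpa using hlen)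
    exact p.mem_edges_toSubgraph.1 (Subgraph.edgeSet_mono hwp (w.mem_edges_toSubgraph.2 he))
  have p_not_nil : ¬ p.Nil := by
    rw [← Walk.length_eq_zero_iff, ← Walk.length_edges, ← edges_perm.length_eq,
      Walk.length_edges]
    exact (hw.three_le_length.trans_lt' (by simp)).ne'
  have support_subset : w.support.tail ⊆ p.support.tail := fun x hx => by
    have hxp : x ∈ p.support :=
      p.mem_verts_toSubgraph.1 (hwp.1 (w.mem_verts_toSubgraph.2 (List.mem_of_mem_tail hx)))
    rcases p.mem_support_iff.1 hxp with rfl | h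
    · exact Walk.end_mem_tail_support p_not_nil
    · exact h
  have support_perm : w.support.tail.Perm p.support.tail :=
    (hw.support_nodup.subperm support_subset).perm_of_length_le (by simpa using hlen)
  exact ⟨⟨⟨edges_perm.nodup_iff.1 hw.edges_nodup⟩, fun h => p_not_nil (h ▸ Walk.Nil.nil)⟩,
    support_perm.nodup_iff.1 hw.support_nodup⟩

lemma isCycle_of_not_isAcyclic_coe_toSubgraph {p : G.Walk v v}
    (hp : ¬ p.toSubgraph.coe.IsAcyclic) (hlen : (p.length : ℕ∞) ≤ G.egirth) : p.IsCycle := by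
  obtain ⟨u, w, hw, hwp⟩ := exists_isCycle_toSubgraph_le_of_not_isAcyclic_coe hp
  exact isCycle_of_toSubgraph_le_of_length_le hw hwp
    (by exact_mod_cast hlen.trans (egirth_le_length hw))

end Cycles

/-- The number of closed walks of length `l` based at `v` that run once around a cycle. Both
orientations count, so this is twice the number of cycles of length `l` through `v`. -/
noncomputable def rootedCycleCount {V : Type*} (G : SimpleGraph V) (v : V) (l : ℕ) : ℕ :=
  Nat.card {p : G.Walk v v // p.length = l ∧ p.IsCycle}

section Counting

variable {V : Type*} {G : SimpleGraph V} [G.LocallyFinite] {l : ℕ}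

lemma natCard_walk_length_eq_and [DecidableEq V] (u v : V) (P : G.Walk u v → Prop)
    [DecidablePred P] :
    Nat.card {p : G.Walk u v // p.length = l ∧ P p} = #{p ∈ G.finsetWalkLength l u v | P p} :=
  Nat.subtype_card _ fun p => by rw [mem_filter, mem_finsetWalkLength_iff]

lemma closedWalkCount_le_cycleFreeClosedWalkCount_add_rootedCycleCount (v : V)
    (hl : (l : ℕ∞) ≤ G.egirth) :
    G.closedWalkCount v l ≤ G.cycleFreeClosedWalkCount v l + rootedCycleCount G v l := by
  classical
  have card_all : G.closedWalkCount v l = #(G.finsetWalkLength l v v) :=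
    Nat.subtype_card _ fun p => mem_finsetWalkLength_iff
  have card_not_free_le : #{p ∈ G.finsetWalkLength l v v | ¬ p.toSubgraph.coe.IsAcyclic} ≤
      #{p ∈ G.finsetWalkLength l v v | p.IsCycle} := by
    refine card_le_card (monotone_filter_right _ fun p hp hnot_free => ?_)
    exact isCycle_of_not_isAcyclic_coe_toSubgraph hnot_free (mem_finsetWalkLength_iff.1 hp ▸ hl)
  rw [card_all, cycleFreeClosedWalkCount, rootedCycleCount, natCard_walk_length_eq_and,
    natCard_walk_length_eq_and,
    ← card_filter_add_card_filter_not (fun p => p.toSubgraph.coe.IsAcyclic)]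
  exact Nat.add_le_add_left card_not_free_le _

lemma two_le_card_neighborFinset_filter_mem_edges [DecidableEq V] {v : V} {p : G.Walk v v}
    (hp : p.IsCycle) : 2 ≤ #{u ∈ G.neighborFinset v | s(v, u) ∈ p.edges} := by
  have snd_mem : s(v, p.snd) ∈ p.edges := Walk.mk_start_snd_mem_edges hp.not_nil
  have penultimate_mem : s(v, p.penultimate) ∈ p.edges :=
    Sym2.eq_swap ▸ Walk.mk_penultimate_end_mem_edges hp.not_nil
  rw [← card_pair hp.snd_ne_penultimate]
  refine card_le_card fun u hu => ?_
  suffices s(v, u) ∈ p.edges by simpa [this] using p.adj_of_mem_edges this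
  rcases mem_insert.1 hu with rfl | hu
  · exact snd_mem
  · exact mem_singleton.1 hu ▸ penultimate_mem

lemma rootedCycleCount_mul_two_le {v : V} {N : ℕ}
    (hN : ∀ u, G.Adj v u →
      Nat.card {p : G.Walk v v // p.IsCycle ∧ p.length = l ∧ s(v, u) ∈ p.edges} ≤ N) :
    rootedCycleCount G v l * 2 ≤ G.degree v * N := by
  classical
  rw [rootedCycleCount, natCard_walk_length_eq_and, ← card_neighborFinset_eq_degree]
  refine card_mul_le_card_mul (fun p u => s(v, u) ∈ p.edges) (fun p hp => ?_) fun u hu => ?_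
  · exact two_le_card_neighborFinset_filter_mem_edges (mem_filter.1 hp).2
  · refine (hN u ((G.mem_neighborFinset v u).1 hu)).trans' (le_of_eq ?_)
    simp only [and_left_comm (a := Walk.IsCycle _), natCard_walk_length_eq_and, bipartiteBelow,
      filter_filter]

end Counting

section AdjMatrix

variable {V : Type*} [Fintype V] {G : SimpleGraph V} [DecidableRel G.Adj]

lemma two_mul_card_filter_coloring_eq {k : ℕ} (hk : 0 < k) (hreg : G.IsRegularOfDegree k)
    (C : G.Coloring Bool) (b : Bool) : 2 * #{u | C u = b} = Fintype.card V := by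
  classical
  have hbip : G.IsBipartiteWith ({u | C u = b} : Finset V) ({u | ¬ C u = b} : Finset V) := by
    refine ⟨disjoint_coe.2 (disjoint_filter_filter_not _ _ _), fun x y hxy => ?_⟩
    have hne := C.valid hxy
    simp only [coe_filter, mem_univ, true_and, Set.mem_ofPred_eq]
    revert hne
    cases C x <;> cases C y <;> cases b <;> simp
  have card_eq : #{u | C u = b} = #{u | ¬ C u = b} := by
    have hsum := isBipartiteWith_sum_degrees_eq hbip
    simp only [hreg.degree_eq, sum_const, smul_eq_mul] at hsum
    exact Nat.eq_of_mul_eq_mul_right hk hsum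
  rw [two_mul, ← card_univ, ← card_filter_add_card_filter_not (s := univ) (fun u => C u = b),
    ← card_eq]

variable [DecidableEq V]

lemma sum_adjMatrix_pow_apply_of_regular {R : Type*} [Semiring R] {k : ℕ}
    (hreg : G.IsRegularOfDegree k) (m : ℕ) (v : V) :
    ∑ u, (G.adjMatrix R ^ m) v u = (k : R) ^ m := by
  induction m generalizing v with
  | zero => simp [one_apply]
  | succ m ih =>
    simp only [pow_succ', adjMatrix_mul_apply]
    rw [sum_comm]
    simp [ih, hreg.degree_eq]

lemma sum_sq_adjMatrix_pow_apply {R : Type*} [CommSemiring R] (m : ℕ) (v : V) :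
    ∑ u, (G.adjMatrix R ^ m) v u ^ 2 = (G.adjMatrix R ^ (2 * m)) v v := by
  have hsymm : (G.adjMatrix R ^ m).IsSymm := G.isSymm_adjMatrix.pow m
  rw [two_mul, pow_add, mul_apply]
  exact sum_congr rfl fun u _ => by rw [sq, hsymm.apply]

lemma adjMatrix_pow_apply_self_eq_closedWalkCount {R : Type*} [Semiring R] (m : ℕ) (v : V) :
    (G.adjMatrix R ^ m) v v = G.closedWalkCount v m := by
  rw [adjMatrix_pow_apply_eq_card_walk, closedWalkCount, Nat.card_eq_fintype_card]
  rfl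

lemma adjMatrix_pow_apply_eq_zero_of_coloring_ne {R : Type*} [Semiring R] {m : ℕ} (hm : Even m)
    (C : G.Coloring Bool) {u v : V} (huv : C u ≠ C v) : (G.adjMatrix R ^ m) u v = 0 := by
  have : IsEmpty {p : G.Walk u v | p.length = m} := by
    refine ⟨fun ⟨p, hp⟩ => huv (Bool.eq_iff_iff.2 ?_)⟩
    exact (C.even_length_iff_congr p).1 (hp ▸ hm)
  rw [adjMatrix_pow_apply_eq_card_walk, Fintype.card_eq_zero, Nat.cast_zero]

end AdjMatrix

lemma sq_sum_sub_le_card_sub_one_mul {ι R : Type*} [CommRing R] [LinearOrder R]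
    [IsStrictOrderedRing R] {s : Finset ι} {i : ι} (hi : i ∈ s) (f : ι → R) :
    (∑ j ∈ s, f j - f i) ^ 2 ≤ (#s - 1) * (∑ j ∈ s, f j ^ 2 - f i ^ 2) := by
  classical
  rw [← sum_erase_eq_sub hi, ← sum_erase_eq_sub hi, ← Nat.cast_pred (card_pos.2 ⟨i, hi⟩),
    ← card_erase_of_mem hi]
  exact sq_sum_le_card_mul_sum_sq

lemma two_mul_sq_pow_sub_closedWalkCount_le {V : Type*} [Fintype V] {G : SimpleGraph V}
    [DecidableRel G.Adj] {k m : ℕ} (hk : 0 < k) (hm : Even m) (hbip : G.Colorable 2)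
    (hreg : G.IsRegularOfDegree k) (v : V) :
    2 * ((k : ℤ) ^ m - G.closedWalkCount v m) ^ 2 ≤
      (Fintype.card V - 2) * (G.closedWalkCount v (2 * m) - (G.closedWalkCount v m : ℤ) ^ 2) := by
  classical
  let C : G.Coloring Bool := hbip.toColoring (by simp)
  let P : Finset V := {u | C u = C v}
  let a : V → ℤ := (G.adjMatrix ℤ ^ m) v
  have card_P : 2 * (#P : ℤ) = Fintype.card V := by
    exact_mod_cast two_mul_card_filter_coloring_eq hk hreg C (C v)
  have a_eq_zero {u : V} (hu : u ∉ P) : a u = 0 :=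
    adjMatrix_pow_apply_eq_zero_of_coloring_ne hm C fun h => hu (by simp [P, h])
  have a_self : a v = G.closedWalkCount v m := adjMatrix_pow_apply_self_eq_closedWalkCount m v
  have sum_a : ∑ u ∈ P, a u = (k : ℤ) ^ m := by
    rw [← sum_adjMatrix_pow_apply_of_regular hreg m v]
    exact sum_subset (subset_univ P) fun u _ hu => a_eq_zero hu
  have sum_sq_a : ∑ u ∈ P, a u ^ 2 = G.closedWalkCount v (2 * m) := by
    rw [← adjMatrix_pow_apply_self_eq_closedWalkCount, ← sum_sq_adjMatrix_pow_apply]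
    exact sum_subset (subset_univ P) fun u _ hu => by rw [a_eq_zero hu, zero_pow two_ne_zero]
  have cauchy_schwarz := sq_sum_sub_le_card_sub_one_mul (i := v) (s := P) (by simp [P]) a
  rw [sum_a, sum_sq_a, a_self] at cauchy_schwarz
  rw [← card_P]
  linarith

theorem bipartite_egr_even_girth_0mod4_lower_bound_general {V : Type*} [Finite V]
    (G : SimpleGraph V) {k g lam : ℕ} (hk : 0 < k) (hg : 4 ∣ g) (hbip : G.Colorable 2)
    (hreg : ∀ v : V, (G.neighborSet v).ncard = k) (hgirth : (g : ℕ∞) ≤ G.egirth) (v : V)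
    (hlam : ∀ u, G.Adj v u →
      Nat.card {p : G.Walk v v // p.IsCycle ∧ p.length = g ∧ s(v, u) ∈ p.edges} ≤ 2 * lam) :
    2 * ((G.cycleFreeClosedWalkCount v g : ℤ) + k * lam + (k : ℤ) ^ g
        - 2 * G.closedWalkCount v (g / 2) * (k : ℤ) ^ (g / 2)) ≤
      Nat.card V *
        (G.cycleFreeClosedWalkCount v g + k * lam - (G.closedWalkCount v (g / 2) : ℤ) ^ 2) := by
  classical
  have := Fintype.ofFinite V
  have hdeg : G.IsRegularOfDegree k := fun u => by
    rw [← hreg u, ← card_neighborSet_eq_degree, Set.ncard_eq_toFinset_card', Set.toFinset_card]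
  obtain ⟨m, rfl⟩ : ∃ m, g = 2 * (2 * m) := hg.imp fun m hm => by omega
  rw [Nat.mul_div_cancel_left _ two_pos, Nat.card_eq_fintype_card]
  have cycles_le : rootedCycleCount G v (2 * (2 * m)) ≤ k * lam := by
    have two_mul_le := rootedCycleCount_mul_two_le hlam
    rw [hdeg.degree_eq] at two_mul_le
    linarith
  have walks_le : (G.closedWalkCount v (2 * (2 * m)) : ℤ) ≤
      G.cycleFreeClosedWalkCount v (2 * (2 * m)) + k * lam := by
    exact_mod_cast (closedWalkCount_le_cycleFreeClosedWalkCount_add_rootedCycleCount v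
      hgirth).trans (Nat.add_le_add_left cycles_le _)
  have two_le_card : (2 : ℤ) ≤ Fintype.card V := by
    have k_lt_card : k < Fintype.card V := hdeg.degree_eq v ▸ G.degree_lt_card_verts v
    omega
  have row_bound := (two_mul_sq_pow_sub_closedWalkCount_le hk (even_two_mul m) hbip hdeg v).trans
    (mul_le_mul_of_nonneg_left (sub_le_sub_right walks_le _) (sub_nonneg.2 two_le_card))
  rw [show (k : ℤ) ^ (2 * (2 * m)) = ((k : ℤ) ^ (2 * m)) ^ 2 by rw [← pow_mul, mul_comm]]
  linarith

/-- Let `k ≥ 3` and let `G` be a bipartite `egr(n, k, g, λ)` graph with `g ≡ 0 (mod 4)`.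
If every vertex of `G` lies on exactly `c₁` closed walks of length `g/2` and on
exactly `c` cycle-free closed walks of length `g`, then
`n(c + kλ - c₁²) ≥ 2(c + kλ + k^g - 2c₁k^(g/2))`. -/
theorem bipartite_egr_even_girth_0mod4_lower_bound (n k g lam c₁ c : ℕ) (hk : 3 ≤ k)
    (hg : g % 4 = 0) {V : Type*} (G : SimpleGraph V) (hbip : G.Colorable 2)
    (h : G.IsEGR n k g lam)
    (hc₁ : ∀ v : V, G.closedWalkCount v (g / 2) = c₁)
    (hc : ∀ v : V, G.cycleFreeClosedWalkCount v g = c) :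
    (n : ℤ) * (c + k * lam - c₁ ^ 2) ≥
      2 * ((c : ℤ) + k * lam + (k : ℤ) ^ g - 2 * c₁ * (k : ℤ) ^ (g / 2)) := by
  obtain ⟨_, rfl, hreg, hgirth, hlam⟩ := h
  have not_acyclic : ¬ G.IsAcyclic := by
    rw [← egirth_eq_top, hgirth]
    exact ENat.natCast_ne_top g
  obtain ⟨v, -⟩ := exists_egirth_eq_length.2 not_acyclic
  simpa only [hc₁, hc] using bipartite_egr_even_girth_0mod4_lower_bound_general G (by omega)
    (Nat.dvd_of_mod_eq_zero hg) hbip hreg hgirth.ge v fun u hu => (hlam v u hu).le
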